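/- arXiv:1810.02803 — 3 statements merged into one kernel-verified Lean document; each statement's English description precedes it below -/
import Mathlib

section
/- Let R be the ℂ-subalgebra of the polynomial ring ℂ[x,y,z] generated by {q, r₁, r₂, r₃, r₄}. Then ℂ[x,y,z] = R + R·x; that is, every polynomial in ℂ[x,y,z] can be written as r + r'·x with r, r' ∈ R. -/
/-!
`R` contains `z` (from `q`) and hence `s := x + y` (from `r₁`). Expanding `r₄ = (x - 1)(s - x - z)`
gives the monic quadratic relation `x² = (s - z + 1) x - (s - z) - r₄` over `R`. Hence `R + R·x` is
stable under multiplication by `x`, by `y = s - x` and by `z`, and it contains the constants, so it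
is all of `ℂ[x,y,z]`.
-/

open MvPolynomial

/-- `q := (3/4)·(z − 9)` in `ℂ[x,y,z]`, with `x = X 0`, `y = X 1`, `z = X 2`. -/
noncomputable def qPoly : MvPolynomial (Fin 3) ℂ := C (3 / 4 : ℂ) * (X 2 - C 9)

/-- `r₁ := x + y + z + 1`. -/
noncomputable def r1Poly : MvPolynomial (Fin 3) ℂ := X 0 + X 1 + X 2 + 1

/-- `r₂ := x² + 6zx + z² + y² + 6y + 1`. -/
noncomputable def r2Poly : MvPolynomial (Fin 3) ℂ :=
  X 0 ^ 2 + 6 * X 2 * X 0 + X 2 ^ 2 + X 1 ^ 2 + 6 * X 1 + 1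

/-- `r₃ := x³ + 15zx² + 15z²x + z³ + y³ + 15y² + 15y + 1`. -/
noncomputable def r3Poly : MvPolynomial (Fin 3) ℂ :=
  X 0 ^ 3 + 15 * X 2 * X 0 ^ 2 + 15 * X 2 ^ 2 * X 0 + X 2 ^ 3 +
    X 1 ^ 3 + 15 * X 1 ^ 2 + 15 * X 1 + 1

/-- `r₄ := (x − 1)(y − z)`. -/
noncomputable def r4Poly : MvPolynomial (Fin 3) ℂ := (X 0 - 1) * (X 1 - X 2)

/-- `R` is the ℂ-subalgebra of `ℂ[x,y,z]` generated by `q, r₁, r₂, r₃, r₄`. -/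
noncomputable def Rsub : Subalgebra ℂ (MvPolynomial (Fin 3) ℂ) :=
  Algebra.adjoin ℂ {qPoly, r1Poly, r2Poly, r3Poly, r4Poly}


lemma X2_mem_Rsub : (X 2 : MvPolynomial (Fin 3) ℂ) ∈ Rsub := by
  have hq : qPoly ∈ Rsub := Algebra.subset_adjoin (by simp)
  have h : (X 2 : MvPolynomial (Fin 3) ℂ) = C (4 / 3) * qPoly + C 9 := by
    rw [qPoly, ← mul_assoc, ← C_mul]
    norm_num
  rw [h]
  exact add_mem (mul_mem (Rsub.algebraMap_mem _) hq) (Rsub.algebraMap_mem _)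

lemma X0_add_X1_mem_Rsub : (X 0 + X 1 : MvPolynomial (Fin 3) ℂ) ∈ Rsub := by
  have h1 : r1Poly ∈ Rsub := Algebra.subset_adjoin (by simp)
  have h : (X 0 + X 1 : MvPolynomial (Fin 3) ℂ) = r1Poly - X 2 - 1 := by
    rw [r1Poly]; ring
  rw [h]
  exact sub_mem (sub_mem h1 X2_mem_Rsub) (one_mem _)

/-- `R + R·x` is stable under multiplication by `x`, by the quadratic relation for `x` over `R`. -/
lemma exists_mul_X0 {a b : MvPolynomial (Fin 3) ℂ} (ha : a ∈ Rsub) (hb : b ∈ Rsub) :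
    ∃ r ∈ Rsub, ∃ r' ∈ Rsub, (a + b * X 0) * X 0 = r + r' * X 0 := by
  have h4 : r4Poly ∈ Rsub := Algebra.subset_adjoin (by simp)
  have hd := sub_mem X0_add_X1_mem_Rsub X2_mem_Rsub
  refine ⟨b * (-(X 0 + X 1 - X 2) - r4Poly), mul_mem hb (sub_mem (neg_mem hd) h4),
    a + b * (X 0 + X 1 - X 2 + 1), add_mem ha (mul_mem hb (add_mem hd (one_mem _))), ?_⟩
  rw [r4Poly]; ring

/-- `ℂ[x,y,z] = R + R·x`: every polynomial `p` can be written `p = r + r'·x`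
with `r, r' ∈ R`. -/
theorem stmt_3 (p : MvPolynomial (Fin 3) ℂ) :
    ∃ r ∈ Rsub, ∃ r' ∈ Rsub, p = r + r' * X 0 := by
  induction p using MvPolynomial.induction_on with
  | C c => exact ⟨C c, Rsub.algebraMap_mem c, 0, zero_mem _, by simp⟩
  | add p q hp hq =>
    obtain ⟨a, ha, b, hb, rfl⟩ := hp
    obtain ⟨c, hc, d, hd, rfl⟩ := hq
    exact ⟨a + c, add_mem ha hc, b + d, add_mem hb hd, by ring⟩
  | mul_X p i hp =>
    obtain ⟨a, ha, b, hb, rfl⟩ := hp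
    obtain ⟨c, hc, d, hd, h⟩ := exists_mul_X0 ha hb
    have hs := X0_add_X1_mem_Rsub
    have hz := X2_mem_Rsub
    fin_cases i
    · exact ⟨c, hc, d, hd, h⟩
    · refine ⟨a * (X 0 + X 1) - c, sub_mem (mul_mem ha hs) hc,
        b * (X 0 + X 1) - d, sub_mem (mul_mem hb hs) hd, ?_⟩
      change (a + b * X 0) * X 1 = _
      linear_combination -h
    · refine ⟨a * X 2, mul_mem ha hz, b * X 2, mul_mem hb hz, ?_⟩
      change (a + b * X 0) * X 2 = _
      ring
end

section
/- Let n ≥ 1 and let Sp(n) = { g ∈ U(2n) : gᵀ J g = J } be the compact symplectic group. Consider the linear action of Sp(n) × U(1) on V = ℂ ⊕ ℂ ⊕ ℂ²ⁿ ⊕ ℂ²ⁿ given by (g, z)·(s, t, v, w) = (z² s, z⁻² t, z·g v, z⁻¹·g w), and the induced action on the algebra ℂ[V] of polynomial functions on V by (γ·f)(p) = f(γ⁻¹·p). Then the subalgebra of invariant polynomial functions equals the ℂ-subalgebra generated by the two functions (s,t,v,w) ↦ s·t and (s,t,v,w) ↦ ω(v,w) := Σᵢ₌₁ⁿ (vᵢ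 w_{n+i} − v_{n+i} wᵢ); these two functions are algebraically independent over ℂ. In particular, the invariant algebra is a polynomial ring generated by two algebraically independent homogeneous elements of degree 2. -/
/-!
The inclusion of the generated subalgebra in the invariants, and the algebraic independence of the
generators, are direct computations with values at points. The other inclusion is a first
fundamental theorem for two vectors, proved by a slice argument.

*From the compact to the complex group.* Let `f` be invariant. Differentiating along
`τ ↦ exp (τ A)` shows that `df_p (A p) = 0` for every `A` in the Lie algebra of the compact group
`Sp(n)` (`fderiv_lieVec_of_compact`). This condition is ℂ-linear in `A`, and `𝔰𝔭(2n, ℂ)` is the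
complexification of that Lie algebra, so it holds for all `X ∈ 𝔰𝔭(2n, ℂ)` (`fderiv_lieVec`). For
the square-zero element `X = ω(u, ·) u` it says that `f` is constant along `τ ↦ (1 + τ X) p`, hence
`f` is invariant under all complex symplectic transvections (`eval_transvection`).

*Slice.* If `(v, w)` is generic, two transvections move it to `(e, ω(v, w) f₀)`, where `(e, f₀)` is
a fixed hyperbolic pair (`eval_eq_slice_of_ne`). With `h(s, t, c) := f(s, t, e, c f₀)` this gives
`f = h(s, t, ω)` on the complement of a hypersurface, hence as polynomials (`eq_aeval_slice`).

*The circle.* Invariance under `U(1)` yields `h(z² s, z⁻² t, c) = h(s, t, c)` for `|z| = 1`, so only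
monomials `sᵃ tᵃ cᵇ` occur in `h` (`coeff_slice_eq_zero`), and `f` is a polynomial in `s t` and `ω`.
-/

open MvPolynomial Matrix

/-- Index for `ℂ²ⁿ`, split so that the standard symplectic matrix has block form. -/
abbrev K12 (n : ℕ) := Fin n ⊕ Fin n

/-- Coordinates on `V = ℂ ⊕ ℂ ⊕ ℂ²ⁿ ⊕ ℂ²ⁿ`, in the order `(s, t, v, w)`. -/
abbrev Idx12 (n : ℕ) := Unit ⊕ (Unit ⊕ (K12 n ⊕ K12 n))

/-- The standard `2n × 2n` symplectic matrix `J = [[0, 1ₙ], [−1ₙ, 0]]`. -/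
noncomputable def J12 (n : ℕ) : Matrix (K12 n) (K12 n) ℂ := fromBlocks 0 1 (-1) 0

/-- `g` belongs to the compact symplectic group `Sp(n) = {g ∈ U(2n) : gᵀ J g = J}`. -/
def IsSp12 (n : ℕ) (g : Matrix (K12 n) (K12 n) ℂ) : Prop :=
  g ∈ Matrix.unitaryGroup (K12 n) ℂ ∧ gᵀ * J12 n * g = J12 n

/-- The linear action of `Sp(n) × U(1)` on `V = ℂ ⊕ ℂ ⊕ ℂ²ⁿ ⊕ ℂ²ⁿ`:
`(g,z)·(s,t,v,w) = (z² s, z⁻² t, z·g v, z⁻¹·g w)`. -/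
noncomputable def act12 (n : ℕ) (g : Matrix (K12 n) (K12 n) ℂ) (z : ℂ)
    (p : Idx12 n → ℂ) : Idx12 n → ℂ :=
  Sum.elim
    (fun _ => z ^ 2 * p (Sum.inl ()))
    (Sum.elim
      (fun _ => z⁻¹ ^ 2 * p (Sum.inr (Sum.inl ())))
      (Sum.elim
        (fun i => z * ∑ j, g i j * p (Sum.inr (Sum.inr (Sum.inl j))))
        (fun i => z⁻¹ * ∑ j, g i j * p (Sum.inr (Sum.inr (Sum.inr j))))))

/-- The function `(s,t,v,w) ↦ s·t`, as a polynomial. -/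
noncomputable def stPoly (n : ℕ) : MvPolynomial (Idx12 n) ℂ :=
  X (Sum.inl ()) * X (Sum.inr (Sum.inl ()))

/-- The symplectic pairing `(s,t,v,w) ↦ ω(v,w) = Σᵢ (vᵢ w_{n+i} − v_{n+i} wᵢ)`, as a
polynomial. -/
noncomputable def omPoly (n : ℕ) : MvPolynomial (Idx12 n) ℂ :=
  ∑ i : Fin n,
    (X (Sum.inr (Sum.inr (Sum.inl (Sum.inl i)))) *
        X (Sum.inr (Sum.inr (Sum.inr (Sum.inr i)))) -
      X (Sum.inr (Sum.inr (Sum.inl (Sum.inr i)))) *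
        X (Sum.inr (Sum.inr (Sum.inr (Sum.inl i)))))

namespace Inv12

/-! ### The symplectic form and the easy inclusion -/

variable {n : ℕ}

/-- The point `(s, t, v, w)` of `V = ℂ ⊕ ℂ ⊕ ℂ²ⁿ ⊕ ℂ²ⁿ`. -/
def pt (s t : ℂ) (v w : K12 n → ℂ) : Idx12 n → ℂ :=
  Sum.elim (fun _ => s) (Sum.elim (fun _ => t) (Sum.elim v w))

lemma pt_eta (p : Idx12 n → ℂ) :
    pt (p (Sum.inl ())) (p (Sum.inr (Sum.inl ()))) (fun i => p (Sum.inr (Sum.inr (Sum.inl i))))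
      (fun i => p (Sum.inr (Sum.inr (Sum.inr i)))) = p := by
  ext i
  rcases i with i | i | i | i <;> rfl

/-- The standard symplectic form `ω` on `ℂ²ⁿ`. -/
def om (v w : K12 n → ℂ) : ℂ :=
  ∑ i : Fin n, (v (Sum.inl i) * w (Sum.inr i) - v (Sum.inr i) * w (Sum.inl i))

lemma act12_pt (g : Matrix (K12 n) (K12 n) ℂ) (z s t : ℂ) (v w : K12 n → ℂ) :
    act12 n g z (pt s t v w) = pt (z ^ 2 * s) (z⁻¹ ^ 2 * t) (z • (g *ᵥ v)) (z⁻¹ • (g *ᵥ w)) := by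
  ext i
  rcases i with i | i | i | i <;> rfl

lemma eval_stPoly (s t : ℂ) (v w : K12 n → ℂ) : eval (pt s t v w) (stPoly n) = s * t := by
  simp [stPoly, pt]

lemma eval_omPoly (s t : ℂ) (v w : K12 n → ℂ) : eval (pt s t v w) (omPoly n) = om v w := by
  simp [omPoly, pt, om]

lemma om_eq_dotProduct (v w : K12 n → ℂ) : om v w = v ⬝ᵥ (J12 n *ᵥ w) := by
  have h : J12 n *ᵥ w = Sum.elim (fun i => w (Sum.inr i)) (fun i => - w (Sum.inl i)) := by
    rw [J12, Matrix.fromBlocks_mulVec]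
    ext i
    rcases i with i | i <;> simp [Matrix.neg_mulVec]
  rw [h]
  simp [om, dotProduct, Finset.sum_add_distrib, sub_eq_add_neg]

lemma om_add_left (v v' w : K12 n → ℂ) : om (v + v') w = om v w + om v' w := by
  simp [om_eq_dotProduct]

lemma om_sub_left (v v' w : K12 n → ℂ) : om (v - v') w = om v w - om v' w := by
  simp [om_eq_dotProduct, sub_dotProduct]

lemma om_smul_left (a : ℂ) (v w : K12 n → ℂ) : om (a • v) w = a * om v w := by
  simp [om_eq_dotProduct]

lemma om_add_right (v w w' : K12 n → ℂ) : om v (w + w') = om v w + om v w' := by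
  simp [om_eq_dotProduct, Matrix.mulVec_add]

lemma om_sub_right (v w w' : K12 n → ℂ) : om v (w - w') = om v w - om v w' := by
  simp [om_eq_dotProduct, Matrix.mulVec_sub]

lemma om_smul_right (a : ℂ) (v w : K12 n → ℂ) : om v (a • w) = a * om v w := by
  simp [om_eq_dotProduct, Matrix.mulVec_smul]

lemma om_swap (v w : K12 n → ℂ) : om w v = - om v w := by
  simp only [om, ← Finset.sum_neg_distrib]
  exact Finset.sum_congr rfl fun i _ => by ring

lemma om_self (v : K12 n → ℂ) : om v v = 0 := by
  simp [om, mul_comm]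

lemma om_mulVec {g : Matrix (K12 n) (K12 n) ℂ} (hg : gᵀ * J12 n * g = J12 n)
    (v w : K12 n → ℂ) : om (g *ᵥ v) (g *ᵥ w) = om v w := by
  rw [om_eq_dotProduct, om_eq_dotProduct, ← Matrix.vecMul_transpose, ← Matrix.dotProduct_mulVec,
    Matrix.mulVec_mulVec, Matrix.mulVec_mulVec, hg]

/-- `f` is invariant under `Sp(n) × U(1)`. Quantifying over all group elements makes the
inverse in `(γ·f)(p) = f(γ⁻¹·p)` immaterial. -/
def IsInv (f : MvPolynomial (Idx12 n) ℂ) : Prop :=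
  ∀ g, IsSp12 n g → ∀ z : ℂ, ‖z‖ = 1 → ∀ p : Idx12 n → ℂ, eval (act12 n g z p) f = eval p f

lemma isInv_of_mem_adjoin {f : MvPolynomial (Idx12 n) ℂ}
    (hf : f ∈ Algebra.adjoin ℂ {stPoly n, omPoly n}) : IsInv f := by
  intro g hg z hz p
  have hz0 : z ≠ 0 := by rintro rfl; simp at hz
  induction hf using Algebra.adjoin_induction with
  | mem x hx =>
    rw [← pt_eta p, act12_pt]
    rcases hx with rfl | rfl
    · rw [eval_stPoly, eval_stPoly]
      field_simp
    · rw [eval_omPoly, eval_omPoly, om_smul_left, om_smul_right, om_mulVec hg.2]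
      field_simp
  | algebraMap r => simp [MvPolynomial.algebraMap_eq]
  | add x y _ _ hx hy => simp [hx, hy]
  | mul x y _ _ hx hy => simp [hx, hy]

/-! ### Passage to the complex symplectic group -/

lemma J12_sq : J12 n * J12 n = -1 := by
  simp [J12, Matrix.fromBlocks_multiply, ← Matrix.fromBlocks_one, Matrix.fromBlocks_neg]

lemma J12_conjTranspose : (J12 n)ᴴ = - J12 n := by
  simp [J12, Matrix.fromBlocks_conjTranspose, Matrix.fromBlocks_neg]

/-- The exponential maps the Lie algebra of `Sp(n)`, that is, the skew-Hermitian `A` with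
`Aᵀ J + J A = 0`, into `Sp(n)`. -/
lemma isSp12_exp {A : Matrix (K12 n) (K12 n) ℂ} (hA : Aᴴ = -A) (hJ : Aᵀ * J12 n + J12 n * A = 0) :
    IsSp12 n (NormedSpace.exp A) := by
  constructor
  · rw [Matrix.mem_unitaryGroup_iff, Matrix.star_eq_conjTranspose, ← Matrix.exp_conjTranspose, hA,
      Matrix.exp_neg]
    exact Matrix.mul_nonsing_inv _ ((Matrix.isUnit_iff_isUnit_det _).1 (Matrix.isUnit_exp A))
  · have hJ' : Aᵀ = J12 n * A * J12 n := by
      have : Aᵀ * J12 n = - (J12 n * A) := eq_neg_of_add_eq_zero_left hJ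
      calc Aᵀ = - (Aᵀ * J12 n * J12 n) := by rw [Matrix.mul_assoc, J12_sq]; simp
        _ = _ := by rw [this]; simp
    have hu : IsUnit (J12 n) := IsUnit.of_mul_eq_one (-J12 n) (by simp [J12_sq])
    have hinv : (J12 n)⁻¹ = - J12 n := Matrix.inv_eq_right_inv (by simp [J12_sq])
    have h2 : Aᵀ = J12 n * (-A) * (J12 n)⁻¹ := by rw [hinv, hJ']; simp
    rw [← Matrix.exp_transpose, h2, Matrix.exp_conj _ _ hu, hinv, Matrix.exp_neg]
    have h3 := Matrix.nonsing_inv_mul _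
      ((Matrix.isUnit_iff_isUnit_det _).1 (Matrix.isUnit_exp A))
    calc _ = - (J12 n * (NormedSpace.exp A)⁻¹ * (J12 n * J12 n) * NormedSpace.exp A) := by
          simp [Matrix.mul_assoc]
      _ = J12 n * ((NormedSpace.exp A)⁻¹ * NormedSpace.exp A) := by
          rw [J12_sq]; simp [Matrix.mul_assoc]
      _ = _ := by rw [h3, Matrix.mul_one]

/-- The value at `(s, t, v, w)` of the vector field on `V` induced by the matrix `X`; it does not
depend on `s` and `t`. -/
def lieVec (X : Matrix (K12 n) (K12 n) ℂ) (v w : K12 n → ℂ) : Idx12 n → ℂ :=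
  pt 0 0 (X *ᵥ v) (X *ᵥ w)

lemma differentiable_eval {σ : Type*} [Fintype σ] (f : MvPolynomial σ ℂ) :
    Differentiable ℂ (fun p : σ → ℂ => eval p f) := by
  induction f using MvPolynomial.induction_on with
  | C a => simp
  | add p q hp hq => simp only [map_add]; exact hp.add hq
  | mul_X p i hp => simp only [map_mul, eval_X]; exact hp.mul (differentiable_apply i)

section
attribute [local instance] Matrix.linftyOpNormedRing Matrix.linftyOpNormedAlgebra

lemma hasDerivAt_exp_mulVec (A : Matrix (K12 n) (K12 n) ℂ) (v : K12 n → ℂ) :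
    HasDerivAt (fun τ : ℝ => NormedSpace.exp (τ • A) *ᵥ v) (A *ᵥ v) 0 := by
  have h := hasDerivAt_exp_smul_const (𝕂 := ℝ) A (0 : ℝ)
  simp only [zero_smul, NormedSpace.exp_zero, one_mul] at h
  let L : Matrix (K12 n) (K12 n) ℂ →ₗ[ℝ] (K12 n → ℂ) :=
    { toFun := fun M => M *ᵥ v
      map_add' := fun M N => Matrix.add_mulVec M N v
      map_smul' := fun a M => Matrix.smul_mulVec a M v }
  exact (LinearMap.toContinuousLinearMap L).hasFDerivAt.comp_hasDerivAt 0 h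

end

/-- An invariant polynomial is annihilated by the vector fields coming from the Lie algebra of the
compact group. -/
lemma fderiv_lieVec_of_compact {f : MvPolynomial (Idx12 n) ℂ} (hf : IsInv f)
    {A : Matrix (K12 n) (K12 n) ℂ} (hA : Aᴴ = -A) (hJ : Aᵀ * J12 n + J12 n * A = 0)
    (s t : ℂ) (v w : K12 n → ℂ) :
    fderiv ℂ (fun p => eval p f) (pt s t v w) (lieVec A v w) = 0 := by
  have hc : HasDerivAt (fun τ : ℝ => pt s t (NormedSpace.exp (τ • A) *ᵥ v)
      (NormedSpace.exp (τ • A) *ᵥ w)) (lieVec A v w) 0 := by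
    rw [hasDerivAt_pi]
    have hv := hasDerivAt_pi.1 (hasDerivAt_exp_mulVec A v)
    have hw := hasDerivAt_pi.1 (hasDerivAt_exp_mulVec A w)
    rintro (i | i | i | i)
    · exact hasDerivAt_const (0 : ℝ) s
    · exact hasDerivAt_const (0 : ℝ) t
    · exact hv i
    · exact hw i
  have hF := (differentiable_eval f (pt s t v w)).hasFDerivAt.restrictScalars ℝ
  have h0 : pt s t (NormedSpace.exp ((0 : ℝ) • A) *ᵥ v) (NormedSpace.exp ((0 : ℝ) • A) *ᵥ w)
      = pt s t v w := by simp
  rw [← h0] at hF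
  have hcomp := hF.comp_hasDerivAt (0 : ℝ) hc
  have hconst : ((fun p => eval p f) ∘ fun τ : ℝ => pt s t (NormedSpace.exp (τ • A) *ᵥ v)
      (NormedSpace.exp (τ • A) *ᵥ w)) = fun _ => eval (pt s t v w) f := by
    ext τ
    have hsp : IsSp12 n (NormedSpace.exp (τ • A)) := by
      refine isSp12_exp ?_ ?_
      · simp [Matrix.conjTranspose_smul, hA]
      · rw [Matrix.transpose_smul, Matrix.smul_mul, Matrix.mul_smul, ← smul_add, hJ, smul_zero]
    have := hf _ hsp 1 (by simp) (pt s t v w)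
    rw [act12_pt] at this
    simpa using this
  rw [hconst] at hcomp
  have := hcomp.unique (hasDerivAt_const (0 : ℝ) _)
  rw [h0] at this
  exact this

/-- `𝔰𝔭(2n, ℂ)` is stable under conjugate transposition. -/
lemma conjTranspose_mem_sp {X : Matrix (K12 n) (K12 n) ℂ} (hJ : Xᵀ * J12 n + J12 n * X = 0) :
    Xᴴᵀ * J12 n + J12 n * Xᴴ = 0 := by
  have h := congrArg Matrix.conjTranspose hJ
  simp only [Matrix.conjTranspose_add, Matrix.conjTranspose_mul, J12_conjTranspose,
    Matrix.conjTranspose_zero] at h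
  have e : Xᵀᴴ = Xᴴᵀ := rfl
  rw [e] at h
  have hconj : J12 n * (-J12 n * Xᴴᵀ + Xᴴ * -J12 n) * J12 n = 0 := by rw [h]; simp
  have e2 : J12 n * (-J12 n * Xᴴᵀ + Xᴴ * -J12 n) * J12 n
      = -((J12 n * J12 n) * Xᴴᵀ * J12 n) - J12 n * Xᴴ * (J12 n * J12 n) := by noncomm_ring
  rw [e2, J12_sq] at hconj
  simpa using hconj

/-- An invariant polynomial is annihilated by all of `𝔰𝔭(2n, ℂ)`: write
`X = (X - Xᴴ) / 2 - (i / 2) (i (X + Xᴴ))`, where `X - Xᴴ` and `i (X + Xᴴ)` lie in the Lie algebra of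
`Sp(n)`. -/
lemma fderiv_lieVec {f : MvPolynomial (Idx12 n) ℂ} (hf : IsInv f)
    {X : Matrix (K12 n) (K12 n) ℂ} (hJ : Xᵀ * J12 n + J12 n * X = 0)
    (s t : ℂ) (v w : K12 n → ℂ) :
    fderiv ℂ (fun p => eval p f) (pt s t v w) (lieVec X v w) = 0 := by
  have hJ' := conjTranspose_mem_sp hJ
  have h1 := fderiv_lieVec_of_compact hf (A := X - Xᴴ) (by simp)
    (by
      rw [Matrix.transpose_sub, Matrix.sub_mul, Matrix.mul_sub]
      calc _ = (Xᵀ * J12 n + J12 n * X) - (Xᴴᵀ * J12 n + J12 n * Xᴴ) := by abel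
        _ = 0 := by rw [hJ, hJ', sub_zero]) s t v w
  have h2 := fderiv_lieVec_of_compact hf (A := Complex.I • (X + Xᴴ))
    (by simp [Matrix.conjTranspose_smul, add_comm])
    (by
      rw [Matrix.transpose_smul, Matrix.smul_mul, Matrix.mul_smul, ← smul_add,
        Matrix.transpose_add, Matrix.add_mul, Matrix.mul_add]
      rw [show Xᵀ * J12 n + Xᴴᵀ * J12 n + (J12 n * X + J12 n * Xᴴ)
        = (Xᵀ * J12 n + J12 n * X) + (Xᴴᵀ * J12 n + J12 n * Xᴴ) by abel, hJ, hJ']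
      simp) s t v w
  have e : lieVec X v w = (2⁻¹ : ℂ) • lieVec (X - Xᴴ) v w
      + (-(Complex.I / 2)) • lieVec (Complex.I • (X + Xᴴ)) v w := by
    have key : ∀ a b : ℂ, a = 2⁻¹ * (a - b) + -(Complex.I / 2) * (Complex.I * (a + b)) := by
      intro a b
      linear_combination ((a + b) / 2) * Complex.I_mul_I
    ext i
    rcases i with i | i | i | i
    · simp [lieVec, pt]
    · simp [lieVec, pt]
    · simp only [lieVec, pt, Matrix.sub_mulVec, Matrix.add_mulVec, Matrix.smul_mulVec,
        Pi.add_apply, Pi.smul_apply, Pi.sub_apply, Sum.elim_inr, Sum.elim_inl, smul_eq_mul]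
      exact key _ _
    · simp only [lieVec, pt, Matrix.sub_mulVec, Matrix.add_mulVec, Matrix.smul_mulVec,
        Pi.add_apply, Pi.smul_apply, Pi.sub_apply, Sum.elim_inr, smul_eq_mul]
      exact key _ _
  rw [e, map_add, map_smul, map_smul, h1, h2]
  simp

/-- The matrix of `v ↦ ω(u, v) u`, the infinitesimal generator of the transvections along `u`. -/
noncomputable def transGen (u : K12 n → ℂ) : Matrix (K12 n) (K12 n) ℂ :=
  Matrix.vecMulVec u (u ᵥ* J12 n)

lemma transGen_mulVec (u v : K12 n → ℂ) : transGen u *ᵥ v = om u v • u := by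
  rw [transGen, Matrix.vecMulVec_mulVec, om_eq_dotProduct, Matrix.dotProduct_mulVec]
  ext i
  simp [mul_comm]

lemma transGen_mem_sp (u : K12 n → ℂ) : (transGen u)ᵀ * J12 n + J12 n * transGen u = 0 := by
  have hT : (J12 n)ᵀ = - J12 n := by
    simp [J12, Matrix.fromBlocks_transpose, Matrix.fromBlocks_neg]
  rw [transGen, Matrix.transpose_vecMulVec, Matrix.vecMulVec_mul, Matrix.mul_vecMulVec,
    ← Matrix.vecMul_transpose (J12 n) u, hT, Matrix.vecMul_neg, Matrix.neg_vecMulVec]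
  simp

/-- Invariance under the complex transvections `v ↦ v + τ ω(u, v) u`. -/
lemma eval_transvection {f : MvPolynomial (Idx12 n) ℂ} (hf : IsInv f) (u : K12 n → ℂ)
    (τ s t : ℂ) (v w : K12 n → ℂ) :
    eval (pt s t (v + (τ * om u v) • u) (w + (τ * om u w) • u)) f = eval (pt s t v w) f := by
  -- Since `ω(u, u) = 0`, the curve `c` is an integral curve of the field induced by `transGen u`.
  let c : ℂ → Idx12 n → ℂ := fun τ => pt s t (v + (τ * om u v) • u) (w + (τ * om u w) • u)
  have hc : ∀ τ, HasDerivAt c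
      (lieVec (transGen u) (v + (τ * om u v) • u) (w + (τ * om u w) • u)) τ := by
    intro τ
    have key : ∀ a b d : ℂ, HasDerivAt (fun x : ℂ => a + x * b * d) (b * d) τ := by
      intro a b d
      simpa using ((((hasDerivAt_id τ).mul_const b).mul_const d).const_add a)
    rw [hasDerivAt_pi, lieVec, transGen_mulVec, transGen_mulVec, om_add_right, om_add_right,
      om_smul_right, om_smul_right, om_self, mul_zero, mul_zero, add_zero, add_zero]
    rintro (i | i | i | i)
    · exact hasDerivAt_const τ s
    · exact hasDerivAt_const τ t
    · exact key _ _ _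
    · exact key _ _ _
  have hd : ∀ τ, HasDerivAt (fun τ => eval (c τ) f) 0 τ := by
    intro τ
    have h := (differentiable_eval f (c τ)).hasFDerivAt.comp_hasDerivAt τ (hc τ)
    rwa [fderiv_lieVec hf (transGen_mem_sp u)] at h
  have := is_const_of_deriv_eq_zero (fun τ => (hd τ).differentiableAt) (fun τ => (hd τ).deriv) τ 0
  simpa [c] using this

/-! ### The slice -/

/-- The basis vector `eᵢ` of `ℂ²ⁿ`. -/
def eVec (i : Fin n) : K12 n → ℂ := Pi.single (Sum.inl i) 1

/-- The basis vector `e_{n+i}` of `ℂ²ⁿ`, so that `ω(eVec i, fVec i) = 1`. -/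
def fVec (i : Fin n) : K12 n → ℂ := Pi.single (Sum.inr i) 1

lemma om_eVec (i : Fin n) (v : K12 n → ℂ) : om (eVec i) v = v (Sum.inr i) := by
  simp [om, eVec, Pi.single_apply]

lemma om_fVec (i : Fin n) (v : K12 n → ℂ) : om (fVec i) v = - v (Sum.inl i) := by
  simp [om, fVec, Pi.single_apply]

/-- Generic pairs `(v, w)` are moved into the slice by two transvections: the one along `eVec i - v`
takes `v` to `eVec i` and `w` to some `w'`; the one along `ω(v, w) fVec i - w'` fixes `eVec i` and
takes `w'` to `ω(v, w) fVec i`. The last hypothesis says that `ω(fVec i, w') ≠ 0`, after clearing the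
denominator `ω(eVec i, v)`. -/
lemma eval_eq_slice_of_ne {f : MvPolynomial (Idx12 n) ℂ} (hf : IsInv f) (i : Fin n)
    (s t : ℂ) (v w : K12 n → ℂ) (hd : om (eVec i) v ≠ 0) (hc : om v w ≠ 0)
    (hq : om (fVec i) w * om (eVec i) v + om (eVec i - v) w * om (fVec i) (eVec i - v) ≠ 0) :
    eval (pt s t v w) f = eval (pt s t (eVec i) (om v w • fVec i)) f := by
  set d := om (eVec i) v with hdd
  set u := eVec i - v with hu
  have huv : om u v = d := by rw [hu, om_sub_left, om_self, sub_zero]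
  set w' := w + (d⁻¹ * om u w) • u with hw'
  have h1 := eval_transvection hf u d⁻¹ s t v w
  have hv1 : v + (d⁻¹ * om u v) • u = eVec i := by
    rw [huv, inv_mul_cancel₀ hd, one_smul, hu]; abel
  rw [hv1, ← hw'] at h1
  have hew : om (eVec i) w' = om v w := by
    have hue : om (eVec i) u = - d := by rw [hu, om_sub_right, om_self, zero_sub]
    rw [hw', om_add_right, om_smul_right, hue, hu, om_sub_left]
    field_simp
    ring
  have hef : om (eVec i) (fVec i) = 1 := by simp [om_eVec, fVec]
  set u2 := om v w • fVec i - w' with hu2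
  have hu2e : om u2 (eVec i) = 0 := by
    rw [om_swap, hu2, om_sub_right, om_smul_right, hew, hef]; simp
  have hu2w : om u2 w' = om v w * om (fVec i) w' := by
    rw [hu2, om_sub_left, om_self, om_smul_left, sub_zero]
  have hfw : om (fVec i) w' ≠ 0 := by
    intro h
    apply hq
    rw [hw', om_add_right, om_smul_right] at h
    field_simp at h
    linear_combination h
  have hne : om u2 w' ≠ 0 := by rw [hu2w]; exact mul_ne_zero hc hfw
  have h2 := eval_transvection hf u2 (om u2 w')⁻¹ s t (eVec i) w'
  have hw2 : w' + ((om u2 w')⁻¹ * om u2 w') • u2 = om v w • fVec i := by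
    rw [inv_mul_cancel₀ hne, one_smul, hu2]; abel
  rw [hw2, hu2e, mul_zero, zero_smul, add_zero] at h2
  rw [h2, h1]

lemma eval_aeval_eq {σ τ : Type*} (p : τ → ℂ) (h : σ → MvPolynomial τ ℂ) (φ : MvPolynomial σ ℂ) :
    eval p (aeval h φ) = eval (fun i => eval p (h i)) φ := by
  induction φ using MvPolynomial.induction_on with
  | C a => simp [MvPolynomial.algebraMap_eq]
  | add p q hp hq => rw [map_add, map_add, map_add, hp, hq]
  | mul_X p i hp => rw [map_mul, map_mul, map_mul, hp, aeval_X, eval_X]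

/-- The restriction `h(s, t, c) = f(s, t, eVec i, c • fVec i)` of `f` to the slice, a polynomial in
the three variables `s, t, c`. -/
noncomputable def slice (i : Fin n) (f : MvPolynomial (Idx12 n) ℂ) : MvPolynomial (Fin 3) ℂ :=
  aeval (Sum.elim (fun _ => X 0) (Sum.elim (fun _ => X 1)
    (Sum.elim (fun k => C (eVec i k)) (fun k => C (fVec i k) * X 2)))) f

lemma eval_slice (i : Fin n) (f : MvPolynomial (Idx12 n) ℂ) (s t c : ℂ) :
    eval ![s, t, c] (slice i f) = eval (pt s t (eVec i) (c • fVec i)) f := by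
  rw [slice, eval_aeval_eq]
  congr 2
  ext k
  rcases k with k | k | k | k <;> simp [pt, mul_comm]

lemma eval_aeval_slice (i : Fin n) (f : MvPolynomial (Idx12 n) ℂ) (s t : ℂ) (v w : K12 n → ℂ) :
    eval (pt s t v w) (aeval ![X (Sum.inl ()), X (Sum.inr (Sum.inl ())), omPoly n] (slice i f))
      = eval ![s, t, om v w] (slice i f) := by
  rw [eval_aeval_eq]
  congr 2
  ext k
  fin_cases k
  · simp [pt]
  · simp [pt]
  · simp [eval_omPoly]

/-- An invariant polynomial is recovered from its restriction to the slice: `f = h(s, t, ω)`. -/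
lemma eq_aeval_slice {f : MvPolynomial (Idx12 n) ℂ} (hf : IsInv f) (i : Fin n) :
    f = aeval ![X (Sum.inl ()), X (Sum.inr (Sum.inl ())), omPoly n] (slice i f) := by
  set g := aeval ![X (Sum.inl ()), X (Sum.inr (Sum.inl ())), omPoly n] (slice i f) with hg
  have hgev : ∀ s t v w, eval (pt s t v w) g = eval (pt s t (eVec i) (om v w • fVec i)) f := by
    intro s t v w
    rw [← eval_slice, hg, eval_aeval_slice]
  -- `D`, `Q` and `omPoly n` are the polynomials whose non-vanishing makes `(v, w)` generic.
  let D : MvPolynomial (Idx12 n) ℂ := X (Sum.inr (Sum.inr (Sum.inl (Sum.inr i))))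
  let Q : MvPolynomial (Idx12 n) ℂ :=
    - X (Sum.inr (Sum.inr (Sum.inr (Sum.inl i)))) * D +
      (X (Sum.inr (Sum.inr (Sum.inr (Sum.inr i)))) - omPoly n) *
        (X (Sum.inr (Sum.inr (Sum.inl (Sum.inl i)))) - 1)
  have hD : ∀ s t v w, eval (pt s t v w) D = om (eVec i) v := by
    intro s t v w
    simp [D, pt, om_eVec]
  have hQ : ∀ s t v w, eval (pt s t v w) Q =
      om (fVec i) w * om (eVec i) v + om (eVec i - v) w * om (fVec i) (eVec i - v) := by
    intro s t v w
    simp only [Q, map_add, map_mul, map_sub, map_neg, hD, eval_omPoly, om_sub_left, om_sub_right,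
      om_fVec, om_eVec]
    simp only [pt, eVec, eval_X, Sum.elim_inr, Sum.elim_inl, Pi.single_eq_same, map_one]
    ring
  have hprod : (f - g) * (D * omPoly n * Q) = 0 := by
    refine MvPolynomial.funext fun p => ?_
    rw [← pt_eta p]
    generalize p (Sum.inl ()) = s, p (Sum.inr (Sum.inl ())) = t,
      (fun i => p (Sum.inr (Sum.inr (Sum.inl i)))) = v,
      (fun i => p (Sum.inr (Sum.inr (Sum.inr i)))) = w
    rw [map_mul, map_mul, map_mul, map_sub, hgev, hD, hQ, eval_omPoly, map_zero]
    by_cases h1 : om (eVec i) v = 0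
    · simp [h1]
    by_cases h2 : om v w = 0
    · simp [h2]
    by_cases h3 : om (fVec i) w * om (eVec i) v + om (eVec i - v) w * om (fVec i) (eVec i - v) = 0
    · simp [h3]
    rw [eval_eq_slice_of_ne hf i s t v w h1 h2 h3, sub_self, zero_mul]
  have hne : D * omPoly n * Q ≠ 0 := by
    intro h
    -- At `v = fVec i`, `w = -eVec i` the values of `D`, `omPoly n`, `Q` are `1`, `1`, `2`.
    have h' := congrArg (eval (pt 0 0 (fVec i) (-eVec i))) h
    rw [map_mul, map_mul, hD, hQ, eval_omPoly, map_zero] at h'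
    simp only [om_sub_left, om_sub_right, om_fVec, om_eVec] at h'
    simp [eVec, fVec] at h'
  rcases mul_eq_zero.1 hprod with h | h
  · exact sub_eq_zero.1 h
  · exact absurd h hne

/-! ### The circle action and the conclusion -/

/-- The element `z` acts on `(s, t, z⁻¹ e, z c f₀)`, for which `ω` is still `c`, by taking it back
into the slice. -/
lemma slice_torus {f : MvPolynomial (Idx12 n) ℂ} (hf : IsInv f) (i : Fin n) {z : ℂ}
    (hz : ‖z‖ = 1) (s t c : ℂ) :
    eval ![z ^ 2 * s, z⁻¹ ^ 2 * t, c] (slice i f) = eval ![s, t, c] (slice i f) := by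
  have hz0 : z ≠ 0 := by rintro rfl; simp at hz
  have h1 : IsSp12 n 1 := ⟨one_mem _, by simp⟩
  have hef : om (eVec i) (fVec i) = 1 := by simp [om_eVec, fVec]
  have h := hf 1 h1 z hz (pt s t (z⁻¹ • eVec i) (z • c • fVec i))
  rw [act12_pt, Matrix.one_mulVec, Matrix.one_mulVec, smul_inv_smul₀ hz0, inv_smul_smul₀ hz0] at h
  rw [eval_slice, h]
  conv_lhs => rw [eq_aeval_slice hf i]
  rw [eval_aeval_slice, om_smul_left, om_smul_right, om_smul_right, hef]
  field_simp

lemma coeff_scale {σ : Type*} [Fintype σ] (a : σ → ℂ) (h : MvPolynomial σ ℂ) (m : σ →₀ ℕ) :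
    coeff m (aeval (fun i => C (a i) * X i) h) = (∏ i, a i ^ m i) * coeff m h := by
  classical
  induction h using MvPolynomial.induction_on' with
  | monomial u c =>
    have e : aeval (fun i => C (a i) * X i) (monomial u c)
        = C (∏ i, a i ^ u i) * monomial u c := by
      rw [aeval_monomial, Finsupp.prod_fintype _ _ (by simp), monomial_eq (s := u),
        Finsupp.prod_fintype _ _ (by simp)]
      simp only [mul_pow, Finset.prod_mul_distrib, MvPolynomial.algebraMap_eq, map_prod, map_pow]
      ring
    rw [e, coeff_C_mul, coeff_monomial]
    split_ifs with hu
    · rw [hu]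
    · simp
  | add p q hp hq => rw [map_add, coeff_add, coeff_add, hp, hq, mul_add]

lemma coeff_slice_eq_zero {f : MvPolynomial (Idx12 n) ℂ} (hf : IsInv f) (i : Fin n)
    {m : Fin 3 →₀ ℕ} (hm : m 0 ≠ m 1) : coeff m (slice i f) = 0 := by
  obtain ⟨z, hz, hz1⟩ : ∃ z : ℂ, ‖z‖ = 1 ∧ (z ^ 2) ^ m 0 * (z⁻¹ ^ 2) ^ m 1 = -1 := by
    have hk : ((m 0 : ℂ) - m 1) ≠ 0 := by
      rw [sub_ne_zero]; exact_mod_cast hm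
    -- `z = exp (iπ / (2 (m₀ - m₁)))` satisfies `z ^ (2 (m₀ - m₁)) = -1`.
    refine ⟨Complex.exp ((Real.pi / (2 * ((m 0 : ℝ) - m 1)) : ℝ) * Complex.I),
      Complex.norm_exp_ofReal_mul_I _, ?_⟩
    rw [← Complex.exp_neg, ← Complex.exp_nat_mul, ← Complex.exp_nat_mul, ← Complex.exp_nat_mul,
      ← Complex.exp_nat_mul, ← Complex.exp_add, ← Complex.exp_pi_mul_I]
    congr 1
    push_cast
    field_simp
    ring
  have hscale : aeval (fun i => C (![z ^ 2, z⁻¹ ^ 2, 1] i) * X i) (slice i f) = slice i f := by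
    refine MvPolynomial.funext fun p => ?_
    have hp : p = ![p 0, p 1, p 2] := by ext j; fin_cases j <;> rfl
    have := slice_torus hf i hz (p 0) (p 1) (p 2)
    rw [← hp] at this
    rw [← this, eval_aeval_eq]
    congr 2
    ext j
    fin_cases j <;> simp
  have h := coeff_scale ![z ^ 2, z⁻¹ ^ 2, 1] (slice i f) m
  rw [hscale, Fin.prod_univ_three] at h
  simp only [Matrix.cons_val_zero, Matrix.cons_val_one, Matrix.cons_val, one_pow, mul_one] at h
  rw [hz1] at h
  linear_combination h / 2

lemma mem_adjoin_of_isInv {f : MvPolynomial (Idx12 n) ℂ} (hf : IsInv f) (i : Fin n) :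
    f ∈ Algebra.adjoin ℂ {stPoly n, omPoly n} := by
  rw [eq_aeval_slice hf i, (slice i f).as_sum, map_sum]
  refine Subalgebra.sum_mem _ fun m hm => ?_
  have hm' : m 0 = m 1 := by
    by_contra h
    exact (mem_support_iff.1 hm) (coeff_slice_eq_zero hf i h)
  have e : aeval ![X (Sum.inl ()), X (Sum.inr (Sum.inl ())), omPoly n]
      (monomial m (coeff m (slice i f)))
      = algebraMap ℂ _ (coeff m (slice i f)) * (stPoly n ^ m 1 * omPoly n ^ m 2) := by
    rw [aeval_monomial, Finsupp.prod_fintype _ _ (by simp), Fin.prod_univ_three, stPoly, mul_pow]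
    simp [hm']
  rw [e]
  exact mul_mem (Subalgebra.algebraMap_mem _ _) (mul_mem
    (pow_mem (Algebra.subset_adjoin (by simp)) _) (pow_mem (Algebra.subset_adjoin (by simp)) _))

lemma algebraicIndependent (i : Fin n) : AlgebraicIndependent ℂ ![stPoly n, omPoly n] := by
  rw [algebraicIndependent_iff]
  intro P hP
  refine MvPolynomial.funext fun x => ?_
  have h := congrArg (eval (pt (x 0) 1 (eVec i) (x 1 • fVec i))) hP
  rw [eval_aeval_eq, map_zero] at h
  have e : (fun j => eval (pt (x 0) 1 (eVec i) (x 1 • fVec i)) (![stPoly n, omPoly n] j)) = x := by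
    ext j
    fin_cases j
    · simp [eval_stPoly]
    · simp [eval_omPoly, om_eVec, fVec]
  rw [e] at h
  rw [h, map_zero]

end Inv12

/-- The algebra of `Sp(n) × U(1)`-invariant polynomial functions on
`ℂ ⊕ ℂ ⊕ ℂ²ⁿ ⊕ ℂ²ⁿ` is the ℂ-subalgebra generated by `s·t` and `ω(v,w)`, and these two
functions are algebraically independent over ℂ. -/
theorem stmt_12 (n : ℕ) (hn : 1 ≤ n) :
    {f : MvPolynomial (Idx12 n) ℂ |
        ∀ g, IsSp12 n g → ∀ z : ℂ, ‖z‖ = 1 → ∀ p : Idx12 n → ℂ,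
          eval (act12 n g z p) f = eval p f} =
      (Algebra.adjoin ℂ {stPoly n, omPoly n} : Subalgebra ℂ (MvPolynomial (Idx12 n) ℂ)) ∧
    AlgebraicIndependent ℂ ![stPoly n, omPoly n] := by
  refine ⟨Set.ext fun f => ⟨fun hf => ?_, fun hf => ?_⟩, Inv12.algebraicIndependent ⟨0, hn⟩⟩
  · exact Inv12.mem_adjoin_of_isInv hf ⟨0, hn⟩
  · exact Inv12.isInv_of_mem_adjoin hf
end

section
/- Consider the linear action of SU(2) × U(1) on V = ℂ² ⊕ ℂ² ⊕ ℂ ⊕ ℂ ⊕ ℂ given by (g, z)·(v, w, s, t, r) = (z·g v, z⁻¹·g w, z² s, z⁻² t, r), and the induced action on the algebra ℂ[V] of polynomial functions on V by (γ·f)(p) = f(γ⁻¹·p). Then the subalgebra of invariant polynomial functions equals the ℂ-subalgebra generated by the three functions (v,w,s,t,r) ↦ r, (v,w,s,t,r) ↦ s·t, and (v,w,s,t,r) ↦ v₁w₂ − v₂w₁; these three functions are algebraically independent over ℂ. In particular, the invariant algebra is a polynomial ring generated by three algebraically independent homogeneous elements of respective degrees 1, 2, 2. -/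
/-! The real one-parameter subgroups of `SU(2) × U(1)` complexify: along `exp(iθ)` in the diagonal
torus of `SU(2)`, or in `U(1)`, the value of an invariant `f` is entire in `θ` and constant for real
`θ`, hence constant for complex `θ` (`Invariant15.scalar`, `Invariant15.torus`). Upper unipotent
matrices are limits of rotations conjugated by the complex torus (`Invariant15.unipotent`), so the
Iwasawa decomposition makes `f` invariant under `SL₂(ℂ)` (`Invariant15.sl`).

If `d = v₁w₂ - v₂w₁` and `s` are nonzero, the complexified group moves `(v, w, s, t, r)` to
`(e₁, d e₂, 1, st, r)`. Therefore `f` and the polynomial in `r`, `st`, `d` obtained by restricting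
`f` to this slice agree where `d · s ≠ 0`, and so they are equal (`Invariant15.eq_aeval`).
Restriction to the slice is also a left inverse of `P ↦ P(r, st, d)`, which gives the algebraic
independence. -/

open MvPolynomial

/-- Coordinates on `V = ℂ² ⊕ ℂ² ⊕ ℂ ⊕ ℂ ⊕ ℂ`, in the order `(v, w, s, t, r)`. -/
abbrev Idx15 := Fin 2 ⊕ (Fin 2 ⊕ (Unit ⊕ (Unit ⊕ Unit)))

/-- The linear action of `SU(2) × U(1)` on `V = ℂ² ⊕ ℂ² ⊕ ℂ ⊕ ℂ ⊕ ℂ`: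
`(g,z)·(v,w,s,t,r) = (z·g v, z⁻¹·g w, z² s, z⁻² t, r)`, on coordinates of points. -/
noncomputable def act15 (g : Matrix (Fin 2) (Fin 2) ℂ) (z : ℂ) (p : Idx15 → ℂ) :
    Idx15 → ℂ :=
  Sum.elim
    (fun i => z * ∑ j, g i j * p (Sum.inl j))
    (Sum.elim
      (fun i => z⁻¹ * ∑ j, g i j * p (Sum.inr (Sum.inl j)))
      (Sum.elim
        (fun _ => z ^ 2 * p (Sum.inr (Sum.inr (Sum.inl ()))))
        (Sum.elim
          (fun _ => z⁻¹ ^ 2 * p (Sum.inr (Sum.inr (Sum.inr (Sum.inl ())))))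
          (fun _ => p (Sum.inr (Sum.inr (Sum.inr (Sum.inr ()))))))))

/-- The coordinate function `(v,w,s,t,r) ↦ r`, as a polynomial. -/
noncomputable def rPoly15 : MvPolynomial Idx15 ℂ :=
  X (Sum.inr (Sum.inr (Sum.inr (Sum.inr ()))))

/-- The function `(v,w,s,t,r) ↦ s·t`, as a polynomial. -/
noncomputable def stPoly15 : MvPolynomial Idx15 ℂ :=
  X (Sum.inr (Sum.inr (Sum.inl ()))) * X (Sum.inr (Sum.inr (Sum.inr (Sum.inl ()))))

/-- The function `(v,w,s,t,r) ↦ v₁w₂ − v₂w₁`, as a polynomial. -/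
noncomputable def detPoly15 : MvPolynomial Idx15 ℂ :=
  X (Sum.inl 0) * X (Sum.inr (Sum.inl 1)) - X (Sum.inl 1) * X (Sum.inr (Sum.inl 0))

/-- Invariance of `f` under a single matrix `g`, acting with trivial `U(1)`-component. -/
def FixedBy15 (f : MvPolynomial Idx15 ℂ) (g : Matrix (Fin 2) (Fin 2) ℂ) : Prop :=
  ∀ p : Idx15 → ℂ, eval (act15 g 1 p) f = eval p f

lemma act15_mul (g h : Matrix (Fin 2) (Fin 2) ℂ) (p : Idx15 → ℂ) :
    act15 (g * h) 1 p = act15 g 1 (act15 h 1 p) := by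
  funext i
  rcases i with i | i | i | i | i <;>
    simp [act15, Matrix.mul_apply, Fin.sum_univ_two] <;> ring

lemma act15_one (p : Idx15 → ℂ) : act15 1 1 p = p := by
  funext i
  rcases i with i | i | i | i | i <;>
    simp [act15, Matrix.one_apply]

lemma FixedBy15.mul {f : MvPolynomial Idx15 ℂ} {g h : Matrix (Fin 2) (Fin 2) ℂ}
    (hg : FixedBy15 f g) (hh : FixedBy15 f h) : FixedBy15 f (g * h) := fun p => by
  rw [act15_mul, hg, hh]

/-- An entire curve along which `f` is constant for real times keeps `f` constant for all
complex times, by the identity theorem. -/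
lemma eval_eq_of_real (f : MvPolynomial Idx15 ℂ) (p : Idx15 → ℂ) (c : ℂ → Idx15 → ℂ)
    (hc : ∀ i, Differentiable ℂ fun θ => c θ i)
    (h : ∀ θ : ℝ, eval (c θ) f = eval p f) (θ : ℂ) : eval (c θ) f = eval p f := by
  have h1 : AnalyticOnNhd ℂ (fun θ => eval (c θ) f) Set.univ := by
    have := AnalyticOnNhd.aeval_mvPolynomial (𝕜 := ℂ) (s := Set.univ) (f := c)
      (fun i x _ => (hc i).analyticAt x) f
    simpa [MvPolynomial.aeval_eq_eval] using this
  have h2 : AnalyticOnNhd ℂ (fun _ : ℂ => eval p f) Set.univ := analyticOnNhd_const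
  have h3 : ∃ᶠ z in nhdsWithin (0 : ℂ) {0}ᶜ, eval (c z) f = eval p f := by
    have ht : Filter.Tendsto (fun x : ℝ => (x : ℂ)) (nhdsWithin 0 {0}ᶜ)
        (nhdsWithin (0 : ℂ) {0}ᶜ) := by
      apply tendsto_nhdsWithin_of_tendsto_nhds_of_eventually_within
      · have := Complex.continuous_ofReal.tendsto 0
        simpa using this.mono_left nhdsWithin_le_nhds
      · filter_upwards [self_mem_nhdsWithin] with x hx
        simpa using hx
    exact ht.frequently (Filter.Frequently.of_forall h)
  exact congrFun (h1.eq_of_frequently_eq h2 h3) θ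

/-- The invariants of the statement, as a predicate. -/
def Invariant15 (f : MvPolynomial Idx15 ℂ) : Prop :=
  ∀ g ∈ Matrix.specialUnitaryGroup (Fin 2) ℂ, ∀ z : ℂ, ‖z‖ = 1 →
    ∀ p : Idx15 → ℂ, eval (act15 g z p) f = eval p f

/-- The `U(1)`-invariance extends to `ℂˣ`. -/
lemma Invariant15.scalar {f : MvPolynomial Idx15 ℂ} (hf : Invariant15 f) {z : ℂ} (hz : z ≠ 0)
    (p : Idx15 → ℂ) : eval (act15 1 z p) f = eval p f := by
  have key := eval_eq_of_real f p (fun θ => act15 1 (Complex.exp (θ * Complex.I)) p)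
    (by
      intro i
      rcases i with i | i | i | i | i <;> simp [act15, ← Complex.exp_neg] <;> fun_prop)
    (fun θ => hf 1 (one_mem _) _ (Complex.norm_exp_ofReal_mul_I θ) p)
    (-Complex.log z * Complex.I)
  have e : -Complex.log z * Complex.I * Complex.I = Complex.log z := by
    rw [mul_assoc, Complex.I_mul_I]; ring
  simpa only [e, Complex.exp_log hz] using key

/-- Invariance under the diagonal torus of `SU(2)` extends to that of `SL₂(ℂ)`. -/
lemma Invariant15.torus {f : MvPolynomial Idx15 ℂ} (hf : Invariant15 f) {u : ℂ} (hu : u ≠ 0) :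
    FixedBy15 f !![u, 0; 0, u⁻¹] := by
  intro p
  have key := eval_eq_of_real f p (fun θ => act15 !![Complex.exp (θ * Complex.I), 0; 0,
      (Complex.exp (θ * Complex.I))⁻¹] 1 p)
    (by
      intro i
      rcases i with i | i | i | i | i
      · fin_cases i <;> simp [act15, ← Complex.exp_neg] <;> fun_prop
      · fin_cases i <;> simp [act15, ← Complex.exp_neg] <;> fun_prop
      all_goals simp [act15])
    (fun θ => hf _ (by
      rw [Matrix.mem_specialUnitaryGroup_iff, Matrix.mem_unitaryGroup_iff]
      constructor
      · have : Complex.exp (θ * Complex.I) * (starRingEnd ℂ) (Complex.exp (θ * Complex.I)) = 1 := by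
          rw [Complex.mul_conj, Complex.normSq_eq_norm_sq, Complex.norm_exp_ofReal_mul_I]; simp
        ext i j
        fin_cases i <;> fin_cases j <;>
          simp [Matrix.mul_apply, Fin.sum_univ_two, Matrix.star_apply, this, ← mul_inv]
      · simp [Matrix.det_fin_two]) 1 (by simp) p)
    (-Complex.log u * Complex.I)
  have e : -Complex.log u * Complex.I * Complex.I = Complex.log u := by
    rw [mul_assoc, Complex.I_mul_I]; ring
  simpa only [e, Complex.exp_log hu] using key

/-- Upper unipotent matrices are limits, as `θ → 0`, of rotations by `θ` conjugated by elements
of the complex diagonal torus. -/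
lemma Invariant15.unipotent {f : MvPolynomial Idx15 ℂ} (hf : Invariant15 f) (τ : ℂ) :
    FixedBy15 f !![1, τ; 0, 1] := by
  intro p
  by_cases hτ : τ = 0
  · subst hτ
    rw [← Matrix.one_fin_two, act15_one]
  let M : ℝ → Matrix (Fin 2) (Fin 2) ℂ := fun θ =>
    !![(Real.cos θ : ℂ), τ; -((Real.sin θ : ℂ) ^ 2 / τ), (Real.cos θ : ℂ)]
  have hM : ∀ θ, Real.sin θ ≠ 0 → FixedBy15 f (M θ) := by
    intro θ hθ
    have hs : (Real.sin θ : ℂ) ≠ 0 := by exact_mod_cast hθ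
    -- conjugating by `diag(u, u⁻¹)` scales the upper right entry by `u²`
    obtain ⟨u, hu⟩ := IsAlgClosed.exists_pow_nat_eq (τ / (Real.sin θ : ℂ)) (n := 2) (by norm_num)
    have hu0 : u ≠ 0 := by
      intro h
      rw [h, zero_pow two_ne_zero] at hu
      exact div_ne_zero hτ hs hu.symm
    have hτu : τ = u ^ 2 * (Real.sin θ : ℂ) := by rw [hu]; field_simp
    have hR : FixedBy15 f !![(Real.cos θ : ℂ), (Real.sin θ : ℂ);
        -(Real.sin θ : ℂ), (Real.cos θ : ℂ)] := by
      have h1 : (Real.cos θ : ℂ) * Real.cos θ + (Real.sin θ : ℂ) * Real.sin θ = 1 := by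
        have := Real.cos_sq_add_sin_sq θ
        rw [sq, sq] at this
        exact_mod_cast this
      refine hf _ ?_ 1 (by simp)
      rw [Matrix.mem_specialUnitaryGroup_iff, Matrix.mem_unitaryGroup_iff]
      constructor
      · ext i j
        fin_cases i <;> fin_cases j <;>
          simp [Matrix.mul_apply, Fin.sum_univ_two, Matrix.star_apply,
            -Complex.ofReal_cos, -Complex.ofReal_sin] <;>
          first | linear_combination h1 | ring
      · rw [Matrix.det_fin_two]
        simp [-Complex.ofReal_cos, -Complex.ofReal_sin]
        exact h1
    have := ((hf.torus hu0).mul hR).mul (hf.torus (inv_ne_zero hu0))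
    convert this using 1
    ext i j
    fin_cases i <;> fin_cases j <;>
      simp [M, hτu, -Complex.ofReal_cos, -Complex.ofReal_sin] <;> field_simp
  have hcont : Continuous fun θ => eval (act15 (M θ) 1 p) f := by
    have hc : Continuous fun θ => act15 (M θ) 1 p := by
      refine continuous_pi fun i => ?_
      rcases i with i | i | i | i | i
      · fin_cases i <;> simp [act15, M] <;> fun_prop
      · fin_cases i <;> simp [act15, M] <;> fun_prop
      all_goals simp [act15] <;> fun_prop
    exact (MvPolynomial.continuous_eval f).comp hc
  have h1 : Filter.Tendsto (fun θ => eval (act15 (M θ) 1 p) f) (nhdsWithin 0 (Set.Ioi 0))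
      (nhds (eval (act15 (M 0) 1 p) f)) := (hcont.tendsto 0).mono_left nhdsWithin_le_nhds
  have h2 : Filter.Tendsto (fun θ => eval (act15 (M θ) 1 p) f) (nhdsWithin 0 (Set.Ioi 0))
      (nhds (eval p f)) := by
    refine tendsto_const_nhds.congr' ?_
    filter_upwards [Ioo_mem_nhdsGT (show (0 : ℝ) < 1 by norm_num)] with θ hθ
    refine (hM θ (Real.sin_pos_of_pos_of_lt_pi hθ.1 ?_).ne' p).symm
    linarith [hθ.2, Real.pi_gt_three]
  have h3 := tendsto_nhds_unique h1 h2
  simpa [M] using h3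

/-- `SL₂(ℂ)`-invariance, via the Iwasawa decomposition `SL₂(ℂ) = KAN`. -/
lemma Invariant15.sl {f : MvPolynomial Idx15 ℂ} (hf : Invariant15 f) (a b c d : ℂ)
    (hdet : a * d - b * c = 1) : FixedBy15 f !![a, b; c, d] := by
  have hpos : 0 < Complex.normSq a + Complex.normSq c := by
    by_contra hcon
    have ha := Complex.normSq_nonneg a
    have hc := Complex.normSq_nonneg c
    have ha0 : a = 0 := Complex.normSq_eq_zero.1 (by linarith)
    have hc0 : c = 0 := Complex.normSq_eq_zero.1 (by linarith)
    simp [ha0, hc0] at hdet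
  set n : ℝ := Real.sqrt (Complex.normSq a + Complex.normSq c) with hn
  have hn0 : (n : ℂ) ≠ 0 := by
    exact_mod_cast (Real.sqrt_pos.2 hpos).ne'
  have hn2 : (n : ℂ) ^ 2 = a * (starRingEnd ℂ) a + c * (starRingEnd ℂ) c := by
    rw [Complex.mul_conj, Complex.mul_conj]
    exact_mod_cast Real.sq_sqrt hpos.le
  have hK : FixedBy15 f !![a / n, -(starRingEnd ℂ) c / n; c / n, (starRingEnd ℂ) a / n] := by
    refine hf _ ?_ 1 (by simp)
    rw [Matrix.mem_specialUnitaryGroup_iff, Matrix.mem_unitaryGroup_iff]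
    constructor
    · ext i j
      fin_cases i <;> fin_cases j <;>
        simp [Matrix.mul_apply, Fin.sum_univ_two, Matrix.star_apply] <;>
        field_simp <;> first | linear_combination (-hn2) | ring
    · rw [Matrix.det_fin_two]
      simp
      field_simp
      linear_combination (-hn2)
  have := (hK.mul (hf.torus hn0)).mul (hf.unipotent
    (((starRingEnd ℂ) a * b + (starRingEnd ℂ) c * d) / n ^ 2))
  convert this using 1
  ext i j
  fin_cases i <;> fin_cases j <;> simp <;> field_simp
  · linear_combination b * hn2 - (starRingEnd ℂ) c * hdet
  · linear_combination d * hn2 + (starRingEnd ℂ) a * hdet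

/-- The point `(v, w, s, t, r)` of `V`. -/
def pt15 {R : Type} (v₁ v₂ w₁ w₂ s t r : R) : Idx15 → R :=
  Sum.elim ![v₁, v₂] (Sum.elim ![w₁, w₂]
    (Sum.elim (fun _ => s) (Sum.elim (fun _ => t) (fun _ => r))))

lemma eq_pt15 (p : Idx15 → ℂ) : p = pt15 (p (.inl 0)) (p (.inl 1)) (p (.inr (.inl 0)))
    (p (.inr (.inl 1))) (p (.inr (.inr (.inl ())))) (p (.inr (.inr (.inr (.inl ())))))
    (p (.inr (.inr (.inr (.inr ()))))) := by
  funext i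
  rcases i with i | i | i | i | i
  · fin_cases i <;> simp [pt15]
  · fin_cases i <;> simp [pt15]
  all_goals simp [pt15]

/-- Wherever `det(v, w)` and `s` are nonzero, the complexified group moves `(v, w, s, t, r)` to
`(e₁, det(v, w) e₂, 1, st, r)`, so an invariant takes the same value at these points. -/
lemma Invariant15.eval_slice {f : MvPolynomial Idx15 ℂ} (hf : Invariant15 f)
    (v₁ v₂ w₁ w₂ s t r : ℂ) (hd : v₁ * w₂ - v₂ * w₁ ≠ 0) (hs : s ≠ 0) :
    eval (pt15 v₁ v₂ w₁ w₂ s t r) f = eval (pt15 1 0 0 (v₁ * w₂ - v₂ * w₁) 1 (s * t) r) f := by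
  obtain ⟨z, hz⟩ := IsAlgClosed.exists_pow_nat_eq s (n := 2) (by norm_num)
  have hz0 : z ≠ 0 := by
    rintro rfl
    exact hs (by simpa using hz.symm)
  set d := v₁ * w₂ - v₂ * w₁ with hdd
  have hg := hf.sl (z⁻¹ * v₁) (z * w₁ / d) (z⁻¹ * v₂) (z * w₂ / d)
    (by field_simp; rw [hdd]; ring) (pt15 1 0 0 d 1 (s * t) r)
  rw [← hg, ← hf.scalar hz0 (act15 _ 1 _)]
  congr 2
  subst hz
  funext i
  rcases i with i | i | i | i | i
  · fin_cases i <;> simp [pt15, act15, Matrix.one_apply] <;> field_simp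
  · fin_cases i <;> simp [pt15, act15, Matrix.one_apply] <;> field_simp
  all_goals simp [pt15, act15] <;> try field_simp

lemma aeval_mem15 {A : Subalgebra ℂ (MvPolynomial Idx15 ℂ)} {x : Idx15 → MvPolynomial Idx15 ℂ}
    (hx : ∀ i, x i ∈ A) (f : MvPolynomial Idx15 ℂ) : aeval x f ∈ A := by
  induction f using MvPolynomial.induction_on with
  | C a => rw [aeval_C]; exact A.algebraMap_mem a
  | add p q hp hq => rw [map_add]; exact A.add_mem hp hq
  | mul_X p i hp => rw [map_mul, aeval_X]; exact A.mul_mem hp (hx i)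

/-- An invariant is the polynomial in `r`, `st`, `det(v, w)` obtained by restricting it to the
slice `{(e₁, d e₂, 1, q, r)}`. -/
lemma Invariant15.eq_aeval {f : MvPolynomial Idx15 ℂ} (hf : Invariant15 f) :
    f = aeval (pt15 1 0 0 detPoly15 1 stPoly15 rPoly15) f := by
  have hs : (X (.inr (.inr (.inl ()))) : MvPolynomial Idx15 ℂ) ≠ 0 := X_ne_zero _
  have hd : detPoly15 ≠ 0 := by
    intro h
    have := congrArg (eval (pt15 (1 : ℂ) 0 0 1 0 0 0)) h
    simp [detPoly15, pt15] at this
  -- the two sides agree off the zero locus of `det(v, w) · s`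
  have key : (f - aeval (pt15 1 0 0 detPoly15 1 stPoly15 rPoly15) f) *
      (detPoly15 * X (.inr (.inr (.inl ())))) = 0 := by
    refine MvPolynomial.funext fun p => ?_
    rw [map_mul, map_mul, map_sub, map_zero, eval_X]
    by_cases h1 : eval p detPoly15 = 0
    · simp [h1]
    by_cases h2 : p (.inr (.inr (.inl ()))) = 0
    · simp [h2]
    have h3 : eval p (aeval (pt15 1 0 0 detPoly15 1 stPoly15 rPoly15) f) =
        eval (pt15 1 0 0 (eval p detPoly15) 1 (eval p stPoly15) (eval p rPoly15)) f := by
      rw [← MvPolynomial.coe_aeval_eq_eval, RingHom.coe_coe, MvPolynomial.comp_aeval_apply,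
        ← MvPolynomial.coe_aeval_eq_eval, RingHom.coe_coe]
      congr 2
      funext i
      rcases i with i | i | i | i | i
      · fin_cases i <;> simp [pt15]
      · fin_cases i <;> simp [pt15]
      all_goals simp [pt15]
    have h4 := hf.eval_slice (p (.inl 0)) (p (.inl 1)) (p (.inr (.inl 0)))
      (p (.inr (.inl 1))) (p (.inr (.inr (.inl ())))) (p (.inr (.inr (.inr (.inl ())))))
      (p (.inr (.inr (.inr (.inr ()))))) (by simpa [detPoly15] using h1) h2
    rw [← eq_pt15] at h4
    rw [h3, h4]
    simp [detPoly15, stPoly15, rPoly15]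
  exact sub_eq_zero.1 ((mul_eq_zero.1 key).resolve_right (mul_ne_zero hd hs))

lemma invariant15_of_mem {f : MvPolynomial Idx15 ℂ}
    (hf : f ∈ Algebra.adjoin ℂ {rPoly15, stPoly15, detPoly15}) : Invariant15 f := by
  intro g hg z hz p
  have hz0 : z ≠ 0 := by
    rintro rfl
    simp at hz
  have hdet := (Matrix.mem_specialUnitaryGroup_iff.1 hg).2
  rw [Matrix.det_fin_two] at hdet
  induction hf using Algebra.adjoin_induction with
  | mem x hx =>
    rcases hx with rfl | rfl | rfl
    · simp [rPoly15, act15]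
    · simp [stPoly15, act15]
      field_simp
    · simp [detPoly15, act15, Fin.sum_univ_two]
      field_simp
      linear_combination (p (.inl 0) * p (.inr (.inl 1)) - p (.inl 1) * p (.inr (.inl 0))) * hdet
  | algebraMap a => simp [MvPolynomial.algebraMap_eq]
  | add x y _ _ hx hy => rw [map_add, map_add, hx, hy]
  | mul x y _ _ hx hy => rw [map_mul, map_mul, hx, hy]

/-- Restriction to the slice `{(e₁, d e₂, 1, q, r)}` is a left inverse of
`P ↦ P(r, st, det(v, w))`. -/
lemma algebraicIndependent15 : AlgebraicIndependent ℂ ![rPoly15, stPoly15, detPoly15] := by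
  let φ : MvPolynomial Idx15 ℂ →ₐ[ℂ] MvPolynomial (Fin 3) ℂ :=
    aeval (pt15 1 0 0 (X 2) 1 (X 1) (X 0))
  have h : φ.comp (aeval ![rPoly15, stPoly15, detPoly15]) = AlgHom.id ℂ _ := by
    ext i : 1
    fin_cases i <;> simp [φ, rPoly15, stPoly15, detPoly15, pt15]
  exact Function.LeftInverse.injective (g := φ) fun P => DFunLike.congr_fun h P

/-- The algebra of `SU(2) × U(1)`-invariant polynomial functions on
`ℂ² ⊕ ℂ² ⊕ ℂ ⊕ ℂ ⊕ ℂ` is the ℂ-subalgebra generated by `r`, `s·t` and `v₁w₂ − v₂w₁`,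
and these three functions are algebraically independent over ℂ. -/
theorem stmt_15 :
    {f : MvPolynomial Idx15 ℂ |
        ∀ g ∈ Matrix.specialUnitaryGroup (Fin 2) ℂ, ∀ z : ℂ, ‖z‖ = 1 →
        ∀ p : Idx15 → ℂ, eval (act15 g z p) f = eval p f} =
      (Algebra.adjoin ℂ {rPoly15, stPoly15, detPoly15} :
        Subalgebra ℂ (MvPolynomial Idx15 ℂ)) ∧
    AlgebraicIndependent ℂ ![rPoly15, stPoly15, detPoly15] := by
  refine ⟨Set.Subset.antisymm (fun f hf => ?_) fun f hf => invariant15_of_mem hf,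
    algebraicIndependent15⟩
  rw [Invariant15.eq_aeval hf]
  refine aeval_mem15 (fun i => ?_) f
  have hgen : ∀ x ∈ ({rPoly15, stPoly15, detPoly15} : Set (MvPolynomial Idx15 ℂ)),
      x ∈ Algebra.adjoin ℂ {rPoly15, stPoly15, detPoly15} := fun x hx => Algebra.subset_adjoin hx
  rcases i with i | i | i | i | i
  · fin_cases i <;> simp [pt15]
  · fin_cases i
    · simp [pt15]
    · exact hgen detPoly15 (by simp)
  · exact one_mem _
  · exact hgen stPoly15 (by simp)
  · exact hgen rPoly15 (by simp)
end
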